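/- Summation consensus is the unique fixed point of consensus propagation on a tree: there is exactly one family of messages (m[l→l']), indexed by ordered pairs of adjacent vertices of G and with values in V, satisfying the fixed-point equations m[l→l'] = a[l] + Σ_{l''∈N(l)\{l'}} m[l''→l] for every ordered pair (l,l') of adjacent vertices; it is given by m[l→l'] = Σ_{l''∈C(l,l')} a[l'']. Consequently, every vertex recovers the total sum: a[l] + Σ_{l'∈N(l)} m[l'→l] = Σ_{l''∈𝓛} a[l''] for every vertex l. -/

import Mathlib

open SimpleGraph

/-!
Rooted at `l`, the component `C(l, l')` consists of `l` and, for every neighbour `l'' ≠ l'` of `l`,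
the component `C(l'', l)`. Acyclicity makes these pieces disjoint, so summing `a` over them gives
the fixed-point equations; it also makes each `C(l'', l)` strictly smaller than `C(l, l')`, so the
equations determine the messages by induction on the size of `C(l, l')`. When `{l, l'}` is not an
edge, `C(l, l')` is the whole component of `l`, and the same decomposition gives the total sum.
-/

section Branch

variable {L : Type*} {G : SimpleGraph L} {l l' l'' : L}

/-- The component `C(l, l')` of `l` after deleting the edge `{l, l'}`. It is defined for arbitrary
`l` and `l'`; if they are not adjacent, it is the connected component of `l` in `G`. -/
def branch (G : SimpleGraph L) (l l' : L) : Set L :=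
  {x | (G.deleteEdges {s(l, l')}).Reachable x l}

theorem self_mem_branch : l ∈ branch G l l' := Reachable.refl l

theorem branch_self : branch G l l = (G.connectedComponentMk l).supp := by
  have hdiag : G.deleteEdges {s(l, l)} = G := by simp
  ext x
  simp only [branch, hdiag, Set.mem_ofPred_eq, ConnectedComponent.mem_supp_iff,
    ConnectedComponent.eq]

theorem disjoint_branch_branch_swap (hG : G.IsAcyclic) (h : G.Adj l l') :
    Disjoint (branch G l l') (branch G l' l) := by
  have hbridge : ¬ (G.deleteEdges {s(l, l')}).Reachable l l' :=
    isBridge_iff.1 (isAcyclic_iff_forall_adj_isBridge.1 hG h)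
  rw [Set.disjoint_left]
  intro x hx hx'
  rw [branch, Sym2.eq_swap] at hx'
  exact hbridge (hx.symm.trans hx')

theorem notMem_branch (hG : G.IsAcyclic) (h : G.Adj l l'') : l ∉ branch G l'' l :=
  Set.disjoint_left.1 (disjoint_branch_branch_swap hG h) self_mem_branch

theorem reachable_deleteEdges_of_notMem_support {x y : L} (p : G.Walk x y) (hp : l ∉ p.support) :
    (G.deleteEdges {s(l, l')}).Reachable x y := by
  by_contra h
  exact hp (p.fst_mem_support_of_mem_edges (p.mem_edges_of_not_reachable_deleteEdges h))

theorem branch_subset_branch (hG : G.IsAcyclic) (h : G.Adj l l'') (hne : l'' ≠ l') :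
    branch G l'' l ⊆ branch G l l' := by
  classical
  rintro x ⟨p⟩
  have hp : l ∉ p.support := fun hl => notMem_branch hG h (p.dropUntil l hl).reachable
  have hx : (G.deleteEdges {s(l, l')}).Reachable x l'' :=
    reachable_deleteEdges_of_notMem_support (p.mapLe (deleteEdges_le _)) (by simpa using hp)
  have hadj : (G.deleteEdges {s(l, l')}).Adj l'' l := by
    simpa [deleteEdges_adj, h.symm, h.ne'] using hne
  exact hx.trans hadj.reachable

theorem branch_subset_insert_biUnion :
    branch G l l' ⊆ insert l (⋃ l'' ∈ G.neighborSet l \ {l'}, branch G l'' l) := by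
  intro x hx
  obtain ⟨p, hp⟩ := hx.symm.exists_isPath
  cases p with
  | nil => exact Set.mem_insert _ _
  | @cons _ b _ h q =>
    have hb : b ∈ G.neighborSet l \ {l'} := by
      rw [deleteEdges_adj] at h
      exact ⟨h.1, by rintro rfl; exact h.2 rfl⟩
    have hq : l ∉ q.support := ((Walk.cons_isPath_iff _ _).1 hp).2
    have hbx : (G.deleteEdges {s(l, b)}).Reachable b x :=
      reachable_deleteEdges_of_notMem_support (q.mapLe (deleteEdges_le _)) (by simpa using hq)
    rw [Sym2.eq_swap] at hbx
    exact Or.inr (Set.mem_biUnion hb hbx.symm)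

theorem branch_eq_insert_biUnion (hG : G.IsAcyclic) (l l' : L) :
    branch G l l' = insert l (⋃ l'' ∈ G.neighborSet l \ {l'}, branch G l'' l) :=
  branch_subset_insert_biUnion.antisymm <| Set.insert_subset self_mem_branch <|
    Set.iUnion₂_subset fun _ h => branch_subset_branch hG h.1 h.2

theorem pairwiseDisjoint_branch (hG : G.IsAcyclic) (l : L) :
    (G.neighborSet l).PairwiseDisjoint (branch G · l) := fun _ hb _ hc hne =>
  (disjoint_branch_branch_swap hG hc).mono_left (branch_subset_branch hG hb hne)

theorem branch_ssubset_branch (hG : G.IsAcyclic) (h : G.Adj l l'') (hne : l'' ≠ l') :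
    branch G l'' l ⊂ branch G l l' :=
  (branch_subset_branch hG h hne).ssubset_of_mem_notMem self_mem_branch (notMem_branch hG h)

theorem neighborSet.sdiff_subset_branch (hG : G.IsAcyclic) (l l' : L) :
    G.neighborSet l \ {l'} ⊆ branch G l l' := fun _ h =>
  branch_subset_branch hG h.1 h.2 self_mem_branch

end Branch

section Consensus

variable {L : Type*} {G : SimpleGraph L} {V : Type*} [AddCommMonoid V]

theorem finsum_mem_branch (hG : G.IsAcyclic) (a : L → V) {l l' : L}
    (hfin : (branch G l l').Finite) :
    ∑ᶠ x ∈ branch G l l', a x =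
      a l + ∑ᶠ l'' ∈ G.neighborSet l \ {l'}, ∑ᶠ x ∈ branch G l'' l, a x := by
  have hnotMem : l ∉ ⋃ l'' ∈ G.neighborSet l \ {l'}, branch G l'' l := by
    simp only [Set.mem_iUnion, not_exists]
    exact fun l'' h => notMem_branch hG h.1
  have hnbhd : (G.neighborSet l \ {l'}).Finite :=
    hfin.subset (neighborSet.sdiff_subset_branch hG l l')
  have hbranch : ∀ l'' ∈ G.neighborSet l \ {l'}, (branch G l'' l).Finite := fun _ h =>
    hfin.subset (branch_subset_branch hG h.1 h.2)
  rw [branch_eq_insert_biUnion hG, finsum_mem_insert a hnotMem (hnbhd.biUnion hbranch),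
    finsum_mem_biUnion ((pairwiseDisjoint_branch hG l).subset Set.sdiff_subset) hnbhd hbranch]

theorem finsum_mem_supp_connectedComponentMk (hG : G.IsAcyclic) (a : L → V) {l : L}
    (hfin : (G.connectedComponentMk l).supp.Finite) :
    ∑ᶠ x ∈ (G.connectedComponentMk l).supp, a x =
      a l + ∑ᶠ l' ∈ G.neighborSet l, ∑ᶠ x ∈ branch G l' l, a x := by
  rw [← branch_self] at hfin ⊢
  rw [finsum_mem_branch hG a hfin, Set.sdiff_singleton_eq_self G.notMem_neighborSet_self]

theorem eq_finsum_mem_branch_of_fixed_point (hG : G.IsAcyclic) (a : L → V) (m : L → L → V)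
    (hm : ∀ l l', G.Adj l l' → (branch G l l').Finite →
      m l l' = a l + ∑ᶠ l'' ∈ G.neighborSet l \ {l'}, m l'' l)
    {l l' : L} (h : G.Adj l l') (hfin : (branch G l l').Finite) :
    m l l' = ∑ᶠ x ∈ branch G l l', a x := by
  induction hn : (branch G l l').ncard using Nat.strong_induction_on generalizing l l' with
  | _ n ih =>
    subst hn
    rw [hm l l' h hfin, finsum_mem_branch hG a hfin]
    congr 1
    refine finsum_mem_congr rfl fun l'' hl'' => ?_
    have hlt : branch G l'' l ⊂ branch G l l' := branch_ssubset_branch hG hl''.1 hl''.2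
    exact ih _ (Set.ncard_lt_ncard hlt hfin) hl''.1.symm (hfin.subset hlt.subset) rfl

theorem consensus_propagation_unique_fixed_point_general (hG : G.IsAcyclic) (a : L → V) :
    (∀ l l', (branch G l l').Finite →
        ∑ᶠ x ∈ branch G l l', a x =
          a l + ∑ᶠ l'' ∈ G.neighborSet l \ {l'}, ∑ᶠ x ∈ branch G l'' l, a x)
      ∧ (∀ m : L → L → V,
          (∀ l l', G.Adj l l' → (branch G l l').Finite →
            m l l' = a l + ∑ᶠ l'' ∈ G.neighborSet l \ {l'}, m l'' l) →
          ∀ l l', G.Adj l l' → (branch G l l').Finite → m l l' = ∑ᶠ x ∈ branch G l l', a x)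
      ∧ (∀ l, (G.connectedComponentMk l).supp.Finite →
          a l + ∑ᶠ l' ∈ G.neighborSet l, ∑ᶠ x ∈ branch G l' l, a x =
            ∑ᶠ x ∈ (G.connectedComponentMk l).supp, a x) :=
  ⟨fun _ _ => finsum_mem_branch hG a,
    fun m hm _ _ => eq_finsum_mem_branch_of_fixed_point hG a m hm,
    fun _ hfin => (finsum_mem_supp_connectedComponentMk hG a hfin).symm⟩

end Consensus

open scoped Classical in
/-- Summation consensus is the unique fixed point of consensus
propagation on a tree: the family `m[l→l'] = ∑_{l'' ∈ C(l,l')} a l''` (sum over the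
component of `l` after deleting the edge `{l,l'}`) satisfies the fixed-point equations
`m[l→l'] = a l + ∑_{l''∈N(l)\{l'}} m[l''→l]`, any family satisfying these equations
agrees with it on all ordered pairs of adjacent vertices, and consequently every vertex
recovers the total sum `a l + ∑_{l'∈N(l)} m[l'→l] = ∑_{l''} a l''`. -/
theorem consensus_propagation_unique_fixed_point
    {𝓛 : Type*} [Fintype 𝓛] [DecidableEq 𝓛] (G : SimpleGraph 𝓛) [DecidableRel G.Adj]
    (hG : G.IsTree)
    {V : Type*} [AddCommGroup V] [Module ℝ V]
    (a : 𝓛 → V)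
    (Cset : 𝓛 → 𝓛 → Finset 𝓛)
    (hC : ∀ l l' : 𝓛, Cset l l' =
      Finset.univ.filter fun x => (G.deleteEdges {s(l, l')}).Reachable x l) :
    (∀ l l' : 𝓛, G.Adj l l' →
        (∑ l'' ∈ Cset l l', a l'') =
          a l + ∑ l'' ∈ (G.neighborFinset l).erase l', ∑ l''' ∈ Cset l'' l, a l''')
      ∧ (∀ m : 𝓛 → 𝓛 → V,
          (∀ l l' : 𝓛, G.Adj l l' →
            m l l' = a l + ∑ l'' ∈ (G.neighborFinset l).erase l', m l'' l) →
          ∀ l l' : 𝓛, G.Adj l l' → m l l' = ∑ l'' ∈ Cset l l', a l'')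
      ∧ (∀ l : 𝓛,
          (a l + ∑ l' ∈ G.neighborFinset l, ∑ l'' ∈ Cset l' l, a l'') =
            ∑ l'' : 𝓛, a l'') := by
  have hbranch (l l' : 𝓛) : (Cset l l' : Set 𝓛) = branch G l l' := by simp [hC, branch]
  have hsupp (l : 𝓛) : (G.connectedComponentMk l).supp = Set.univ :=
    Set.eq_univ_of_forall fun x => ConnectedComponent.sound (hG.connected.preconnected x l)
  obtain ⟨hfix, huniq, htotal⟩ := consensus_propagation_unique_fixed_point_general hG.isAcyclic a
  simp only [Set.toFinite, forall_const, hsupp] at hfix huniq htotal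
  simp only [← finsum_mem_coe_finset, hbranch, Finset.coe_erase, coe_neighborFinset,
    Finset.coe_univ]
  exact ⟨fun l l' _ => hfix l l', huniq, htotal⟩
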